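/- Suppose 1 ≤ S < N and let x₀ ∈ X_S with ‖x₀‖₀ = S. Then the Barankin bound at x₀ (the infimum of ε(x₀; x̂) over all measurable unbiased estimators x̂) is bounded above by the constrained Barankin bound BB_c(x₀) = S σ² + (N − S) σ² · (1 − ∏_{l ∈ supp(x₀)} g(x₀_l; σ²)); that is, there exists a measurable unbiased estimator x̂ with ε(x₀; x̂) = BB_c(x₀). -/

import Mathlib

open MeasureTheory ProbabilityTheory Filter
open scoped ENNReal Classical

/-- The product Gaussian measure `P_x` on `ℝ^N` with mean `x` and variance `σ²` per coordinate. -/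
noncomputable def gaussP (N : ℕ) (σ : ℝ) (x : Fin N → ℝ) : Measure (Fin N → ℝ) :=
  MeasureTheory.Measure.pi fun i => gaussianReal (x i) (Real.toNNReal (σ ^ 2))

/-- The support of `x`: indices with nonzero entries. Its cardinality is `‖x‖₀`. -/
noncomputable def supp {N : ℕ} (x : Fin N → ℝ) : Finset (Fin N) :=
  Finset.univ.filter fun i => x i ≠ 0

/-- The sparse parameter set `X_S = {x : ‖x‖₀ ≤ S}`. -/
def sparseSet (N S : ℕ) : Set (Fin N → ℝ) := {x | (supp x).card ≤ S}

/-- An estimator is unbiased if each component is `P_x`-integrable with mean `x i`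
for every `x ∈ X_S`. -/
def Unbiased (N S : ℕ) (σ : ℝ) (est : (Fin N → ℝ) → Fin N → ℝ) : Prop :=
  ∀ x ∈ sparseSet N S, ∀ i,
    Integrable (fun y => est y i) (gaussP N σ x) ∧
    (∫ y, est y i ∂gaussP N σ x) = x i

/-- The MSE `ε(x; x̂) = ∫ ‖x̂(y) − x‖₂² dP_x(y)`, as an extended real. -/
noncomputable def MSE (N : ℕ) (σ : ℝ) (est : (Fin N → ℝ) → Fin N → ℝ)
    (x : Fin N → ℝ) : ℝ≥0∞ :=
  ∫⁻ y, ENNReal.ofReal (∑ i, (est y i - x i) ^ 2) ∂gaussP N σ x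

/-- `g(x; σ²) = (2/√(2πσ²)) ∫₀^∞ exp(−(y²+x²)/(2σ²)) sinh(yx/σ²) tanh(yx/σ²) dy`. -/
noncomputable def g (σ x : ℝ) : ℝ :=
  (2 / Real.sqrt (2 * Real.pi * σ ^ 2)) *
    ∫ y in Set.Ioi (0 : ℝ),
      Real.exp (-(y ^ 2 + x ^ 2) / (2 * σ ^ 2)) * Real.sinh (y * x / σ ^ 2) *
        Real.tanh (y * x / σ ^ 2)


lemma aux_prod {N : ℕ} (σ : ℝ) (x : Fin N → ℝ) (A : Finset (Fin N)) (k : Fin N) (hk : k ∉ A)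
    (φ : ℝ → ℝ) (t : Fin N → ℝ → ℝ)
    (hφ : Integrable φ (gaussianReal (x k) (Real.toNNReal (σ ^ 2))))
    (ht : ∀ i, Integrable (t i) (gaussianReal (x i) (Real.toNNReal (σ ^ 2)))) :
    Integrable (fun y : Fin N → ℝ => φ (y k) * ∏ l ∈ A, t l (y l)) (gaussP N σ x) ∧
    (∫ y, φ (y k) * ∏ l ∈ A, t l (y l) ∂gaussP N σ x) =
      (∫ u, φ u ∂gaussianReal (x k) (Real.toNNReal (σ ^ 2))) *
        ∏ l ∈ A, ∫ u, t l u ∂gaussianReal (x l) (Real.toNNReal (σ ^ 2)) := by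
  let f : Fin N → ℝ → ℝ := fun i => if i = k then φ else if i ∈ A then t i else fun _ => 1
  have key : ∀ F : Fin N → (ℝ → ℝ) → ℝ, (∀ i, F i (fun _ => 1) = 1) →
      F k φ * ∏ l ∈ A, F l (t l) = ∏ i, F i (f i) := by
    intro F hF
    rw [← Finset.prod_subset (Finset.subset_univ (insert k A)), Finset.prod_insert hk]
    · congr 1
      · simp [f]
      · refine Finset.prod_congr rfl fun l hl => ?_
        have : l ≠ k := fun h => hk (h ▸ hl)
        simp [f, this, hl]
    · intro i _ hi
      rw [Finset.mem_insert, not_or] at hi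
      simp only [f, if_neg hi.1, if_neg hi.2, hF]
  have hf : ∀ i, Integrable (f i) (gaussianReal (x i) (Real.toNNReal (σ ^ 2))) := by
    intro i
    by_cases h1 : i = k
    · subst h1; simpa [f] using hφ
    · by_cases h2 : i ∈ A
      · simpa [f, h1, h2] using ht i
      · simp [f, h1, h2]
  have e1 : (fun y : Fin N → ℝ => φ (y k) * ∏ l ∈ A, t l (y l)) = fun y => ∏ i, f i (y i) := by
    funext y
    exact key (fun i h => h (y i)) (fun _ => rfl)
  have e2 := key (fun i h => ∫ u, h u ∂gaussianReal (x i) (Real.toNNReal (σ ^ 2)))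
    (fun i => by simp)
  refine ⟨?_, ?_⟩
  · rw [e1]
    exact Integrable.fintype_prod hf
  · rw [e1, e2]
    exact integral_fintype_prod_eq_prod f

lemma aux_odd (v : NNReal) (f : ℝ → ℝ) (hf : Continuous f) (hodd : ∀ u, f (-u) = -f u) :
    ∫ u, f u ∂gaussianReal 0 v = 0 := by
  have h : (gaussianReal 0 v).map (fun u => -u) = gaussianReal 0 v := by
    simpa using gaussianReal_map_neg (μ := 0) (v := v)
  have h2 : ∫ u, f u ∂gaussianReal 0 v = ∫ u, f (-u) ∂gaussianReal 0 v := by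
    conv_lhs => rw [← h]
    exact integral_map (by fun_prop) hf.aestronglyMeasurable
  simp only [hodd, integral_neg] at h2
  linarith

lemma aux_cont_tanh : Continuous Real.tanh := by
  have : Real.tanh = fun x => Real.sinh x / Real.cosh x := funext Real.tanh_eq_sinh_div_cosh
  rw [this]
  exact Real.continuous_sinh.div Real.continuous_cosh fun x => (Real.cosh_pos x).ne'

lemma aux_abs_tanh (u : ℝ) : |Real.tanh u| ≤ 1 := by
  rw [Real.tanh_eq_sinh_div_cosh, abs_div, abs_of_pos (Real.cosh_pos u),
    div_le_one (Real.cosh_pos u)]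
  refine abs_le_of_sq_le_sq ?_ (Real.cosh_pos u).le
  nlinarith [Real.cosh_sq u]

lemma aux_half (f : ℝ → ℝ) (hf : Integrable f) :
    ∫ u, f u = ∫ u in Set.Ioi (0:ℝ), (f u + f (-u)) := by
  rw [integral_add hf.integrableOn hf.comp_neg.integrableOn, integral_comp_neg_Ioi, neg_zero,
    add_comm, intervalIntegral.integral_Iic_add_Ioi hf.integrableOn hf.integrableOn]

lemma aux_int (μ : ℝ) (v : NNReal) (f : ℝ → ℝ) (hf : Continuous f) (hb : ∀ u, |f u| ≤ 1) :
    Integrable f (gaussianReal μ v) :=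
  Integrable.of_bound hf.aestronglyMeasurable 1 (Eventually.of_forall hb)

lemma aux_g (σ : ℝ) (hσ : 0 < σ) (x : ℝ) (f : ℝ → ℝ) (hf : Continuous f) (hb : ∀ u, |f u| ≤ 1)
    (h : ∀ u, Real.exp (u * x / σ ^ 2) * f u + Real.exp (-(u * x / σ ^ 2)) * f (-u) =
      2 * (Real.sinh (u * x / σ ^ 2) * Real.tanh (u * x / σ ^ 2))) :
    ∫ u, f u ∂gaussianReal x (Real.toNNReal (σ ^ 2)) = g σ x := by
  have hv : Real.toNNReal (σ ^ 2) ≠ 0 := by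
    have : 0 < σ ^ 2 := by positivity
    exact (Real.toNNReal_pos.mpr this).ne'
  have hvc : ((Real.toNNReal (σ ^ 2) : NNReal) : ℝ) = σ ^ 2 := Real.coe_toNNReal _ (by positivity)
  rw [integral_gaussianReal_eq_integral_smul hv, aux_half, g, ← integral_const_mul]
  · refine setIntegral_congr_fun measurableSet_Ioi fun u _ => ?_
    simp only [gaussianPDFReal, hvc, smul_eq_mul]
    have e1 : Real.exp (-(u - x) ^ 2 / (2 * σ ^ 2)) =
        Real.exp (-(u ^ 2 + x ^ 2) / (2 * σ ^ 2)) * Real.exp (u * x / σ ^ 2) := by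
      rw [← Real.exp_add]; congr 1; field_simp; ring
    have e2 : Real.exp (-(-u - x) ^ 2 / (2 * σ ^ 2)) =
        Real.exp (-(u ^ 2 + x ^ 2) / (2 * σ ^ 2)) * Real.exp (-(u * x / σ ^ 2)) := by
      rw [← Real.exp_add]; congr 1; field_simp; ring
    rw [e1, e2]
    linear_combination (Real.sqrt (2 * Real.pi * σ ^ 2))⁻¹ *
      Real.exp (-(u ^ 2 + x ^ 2) / (2 * σ ^ 2)) * h u
  · simp only [smul_eq_mul]
    exact (integrable_gaussianPDFReal _ _).mul_bdd (c := 1) hf.aestronglyMeasurable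
      (Eventually.of_forall hb)

noncomputable def auxT {N : ℕ} (σ : ℝ) (x₀ : Fin N → ℝ) (l : Fin N) (u : ℝ) : ℝ :=
  Real.tanh (u * x₀ l / σ ^ 2)

lemma auxT_cont {N : ℕ} (σ : ℝ) (x₀ : Fin N → ℝ) (l : Fin N) : Continuous (auxT σ x₀ l) :=
  aux_cont_tanh.comp (by fun_prop)

lemma auxT_odd {N : ℕ} (σ : ℝ) (x₀ : Fin N → ℝ) (l : Fin N) (u : ℝ) :
    auxT σ x₀ l (-u) = - auxT σ x₀ l u := by
  simp only [auxT, ← Real.tanh_neg]; congr 1; ring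

lemma auxT_bd {N : ℕ} (σ : ℝ) (x₀ : Fin N → ℝ) (l : Fin N) (u : ℝ) :
    |auxT σ x₀ l u| ≤ 1 := aux_abs_tanh _

lemma auxT_bd2 {N : ℕ} (σ : ℝ) (x₀ : Fin N → ℝ) (l : Fin N) (u : ℝ) :
    |(auxT σ x₀ l u) ^ 2| ≤ 1 := by
  rw [abs_pow]; exact pow_le_one₀ (abs_nonneg _) (auxT_bd _ _ _ _)

lemma auxT_int1 {N : ℕ} (σ : ℝ) (hσ : 0 < σ) (x₀ : Fin N → ℝ) (l : Fin N) :
    ∫ u, auxT σ x₀ l u ∂gaussianReal (x₀ l) (Real.toNNReal (σ ^ 2)) = g σ (x₀ l) := by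
  refine aux_g σ hσ _ _ (auxT_cont _ _ _) (auxT_bd _ _ _) fun u => ?_
  rw [auxT_odd, auxT, Real.sinh_eq]
  ring

lemma auxT_int2 {N : ℕ} (σ : ℝ) (hσ : 0 < σ) (x₀ : Fin N → ℝ) (l : Fin N) :
    ∫ u, (auxT σ x₀ l u) ^ 2 ∂gaussianReal (x₀ l) (Real.toNNReal (σ ^ 2)) = g σ (x₀ l) := by
  refine aux_g σ hσ _ _ ((auxT_cont _ _ _).pow 2) (auxT_bd2 _ _ _) fun u => ?_
  rw [auxT_odd, auxT]
  have h1 : Real.tanh (u * x₀ l / σ ^ 2) * Real.cosh (u * x₀ l / σ ^ 2) =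
      Real.sinh (u * x₀ l / σ ^ 2) := by
    rw [Real.tanh_eq_sinh_div_cosh, div_mul_cancel₀ _ (Real.cosh_pos _).ne']
  have h2 := Real.cosh_eq (u * x₀ l / σ ^ 2)
  rw [← h1, h2]
  ring

lemma aux_sq (σ μ : ℝ) :
    Integrable (fun u => (u - μ) ^ 2) (gaussianReal μ (Real.toNNReal (σ ^ 2))) ∧
    ∫ u, (u - μ) ^ 2 ∂gaussianReal μ (Real.toNNReal (σ ^ 2)) = σ ^ 2 := by
  have hm : MemLp (fun u : ℝ => u) 2 (gaussianReal μ (Real.toNNReal (σ ^ 2))) :=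
    memLp_id_gaussianReal 2
  refine ⟨(hm.sub (memLp_const μ)).integrable_sq, ?_⟩
  have h := variance_fun_id_gaussianReal (μ := μ) (v := Real.toNNReal (σ ^ 2))
  rw [variance_eq_integral (by fun_prop), integral_id_gaussianReal,
    Real.coe_toNNReal _ (sq_nonneg σ)] at h
  exact h

/-- The Barankin bound at `x₀` (with `‖x₀‖₀ = S`) is bounded above by the constrained
Barankin bound `BB_c(x₀) = Sσ² + (N−S)σ²(1 − ∏_{l ∈ supp(x₀)} g(x₀_l; σ²))`:
some measurable unbiased estimator attains this MSE at `x₀`. -/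
theorem stmt_5 (N S : ℕ) (σ : ℝ) (hσ : 0 < σ) (hS : 1 ≤ S) (hSN : S < N)
    (x₀ : Fin N → ℝ) (hcard : (supp x₀).card = S) :
    ∃ est : (Fin N → ℝ) → Fin N → ℝ, Measurable est ∧ Unbiased N S σ est ∧
      MSE N σ est x₀ = ENNReal.ofReal ((S : ℝ) * σ ^ 2 +
        ((N : ℝ) - S) * σ ^ 2 * (1 - ∏ l ∈ supp x₀, g σ (x₀ l))) := by
  let est : (Fin N → ℝ) → Fin N → ℝ := fun y i =>
    if i ∈ supp x₀ then y i else y i - y i * ∏ l ∈ supp x₀, auxT σ x₀ l (y l)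
  have hint1 : ∀ (x : Fin N → ℝ) i, Integrable (auxT σ x₀ i)
      (gaussianReal (x i) (Real.toNNReal (σ ^ 2))) := fun x i =>
    aux_int _ _ _ (auxT_cont _ _ _) (auxT_bd _ _ _)
  have hint2 : ∀ (x : Fin N → ℝ) i, Integrable (fun u => (auxT σ x₀ i u) ^ 2)
      (gaussianReal (x i) (Real.toNNReal (σ ^ 2))) := fun x i =>
    aux_int _ _ _ ((auxT_cont _ _ _).pow 2) (auxT_bd2 _ _ _)
  have hid : ∀ μ : ℝ, Integrable (fun u : ℝ => u) (gaussianReal μ (Real.toNNReal (σ ^ 2))) :=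
    fun μ => (memLp_id_gaussianReal (μ := μ) (v := Real.toNNReal (σ ^ 2)) 1).integrable le_rfl
  refine ⟨est, ?_, ?_, ?_⟩
  · refine measurable_pi_lambda _ fun i => ?_
    by_cases hi : i ∈ supp x₀
    · simp only [est, if_pos hi]; fun_prop
    · simp only [est, if_neg hi]
      have : Measurable fun y : Fin N → ℝ => ∏ l ∈ supp x₀, auxT σ x₀ l (y l) :=
        Finset.measurable_prod _ fun l _ => (auxT_cont σ x₀ l).measurable.comp (measurable_pi_apply l)
      fun_prop
  · intro x hx i
    have h0 := aux_prod σ x ∅ i (by simp) (fun u => u) (auxT σ x₀) (hid _) (hint1 x)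
    simp only [Finset.prod_empty, mul_one, integral_id_gaussianReal] at h0
    by_cases hi : i ∈ supp x₀
    · simp only [est, if_pos hi]; exact h0
    · simp only [est, if_neg hi]
      have h1 := aux_prod σ x (supp x₀) i hi (fun u => u) (auxT σ x₀) (hid _) (hint1 x)
      refine ⟨h0.1.sub h1.1, ?_⟩
      rw [integral_sub h0.1 h1.1, h0.2, h1.2, integral_id_gaussianReal]
      by_cases hxi : x i = 0
      · simp [hxi]
      have : ∃ l ∈ supp x₀, x l = 0 := by
        by_contra! hne
        have hsub : insert i (supp x₀) ⊆ supp x := by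
          intro j hj
          rw [Finset.mem_insert] at hj
          rcases hj with rfl | hj
          · simpa [supp] using hxi
          · simpa [supp] using hne j hj
        have := Finset.card_le_card hsub
        rw [Finset.card_insert_of_notMem hi, hcard] at this
        have hx' : (supp x).card ≤ S := hx
        omega
      obtain ⟨l, hl, hxl⟩ := this
      rw [Finset.prod_eq_zero hl, mul_zero, sub_zero]
      rw [hxl]
      exact aux_odd _ _ (auxT_cont _ _ _) (auxT_odd _ _ _)
  · have hi1 : ∀ i, Integrable (fun y => (est y i - x₀ i) ^ 2) (gaussP N σ x₀) ∧
        ∫ y, (est y i - x₀ i) ^ 2 ∂gaussP N σ x₀ =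
          if i ∈ supp x₀ then σ ^ 2 else σ ^ 2 * (1 - ∏ l ∈ supp x₀, g σ (x₀ l)) := by
      intro i
      have hs := aux_sq σ (x₀ i)
      have h0 := aux_prod σ x₀ ∅ i (by simp) (fun u => (u - x₀ i) ^ 2) (auxT σ x₀) hs.1 (hint1 x₀)
      simp only [Finset.prod_empty, mul_one, hs.2] at h0
      by_cases hi : i ∈ supp x₀
      · simp only [est, if_pos hi]; exact h0
      · simp only [est, if_neg hi]
        have hxi : x₀ i = 0 := by simpa [supp] using hi
        have h1 := aux_prod σ x₀ (supp x₀) i hi (fun u => (u - x₀ i) ^ 2) (auxT σ x₀) hs.1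
          (hint1 x₀)
        have h2 := aux_prod σ x₀ (supp x₀) i hi (fun u => (u - x₀ i) ^ 2)
          (fun l u => (auxT σ x₀ l u) ^ 2) hs.1 (hint2 x₀)
        simp only [hs.2, auxT_int1 σ hσ, auxT_int2 σ hσ] at h1 h2
        have e : (fun y : Fin N → ℝ =>
            (y i - y i * ∏ l ∈ supp x₀, auxT σ x₀ l (y l) - x₀ i) ^ 2) = fun y =>
            (y i - x₀ i) ^ 2 - 2 * ((y i - x₀ i) ^ 2 * ∏ l ∈ supp x₀, auxT σ x₀ l (y l)) +
            (y i - x₀ i) ^ 2 * ∏ l ∈ supp x₀, (auxT σ x₀ l (y l)) ^ 2 := by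
          funext y
          rw [Finset.prod_pow, hxi]
          ring
        rw [e]
        refine ⟨(h0.1.sub (h1.1.const_mul 2)).add h2.1, ?_⟩
        have h3 : Integrable (fun y : Fin N → ℝ => (y i - x₀ i) ^ 2 -
            2 * ((y i - x₀ i) ^ 2 * ∏ l ∈ supp x₀, auxT σ x₀ l (y l))) (gaussP N σ x₀) :=
          h0.1.sub (h1.1.const_mul 2)
        rw [integral_add h3 h2.1, integral_sub h0.1 (h1.1.const_mul 2),
          integral_const_mul, h0.2, h1.2, h2.2]
        ring
    rw [MSE, ← ofReal_integral_eq_lintegral_ofReal (integrable_finsetSum _ fun i _ => (hi1 i).1)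
      (Eventually.of_forall fun y => Finset.sum_nonneg fun i _ => sq_nonneg _),
      integral_finsetSum _ fun i _ => (hi1 i).1]
    congr 1
    simp only [(hi1 _).2]
    rw [Finset.sum_ite]
    have c1 : (Finset.univ.filter fun i => i ∈ supp x₀) = supp x₀ := by ext; simp
    have c2 : (Finset.univ.filter fun i => i ∉ supp x₀) = (supp x₀)ᶜ := by ext; simp
    rw [c1, c2, Finset.sum_const, Finset.sum_const, Finset.card_compl, hcard, Fintype.card_fin,
      nsmul_eq_mul, nsmul_eq_mul, Nat.cast_sub hSN.le]
    ring
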